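/- Let X be a type, p₁, p₂ : X → ℝ, and let κ₁₂, κ₂₁ ∈ [0,1) be real numbers. Define p_q = (p₁ − κ₁₂ * p₂)/(1 − κ₁₂), p_g = (p₂ − κ₂₁ * p₁)/(1 − κ₂₁), f₁ = (1 − κ₁₂)/(1 − κ₁₂*κ₂₁), and f₂ = κ₂₁*(1 − κ₁₂)/(1 − κ₁₂*κ₂₁). Then 0 ≤ f₂ ≤ f₁ ≤ 1, and for every x ∈ X: p₁ x = f₁ * p_q x + (1 − f₁) * p_g x and p₂ x = f₂ * p_q x + (1 − f₂) * p_g x. -/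

import Mathlib

/-- The operationally defined quark and gluon distributions make the two samples
statistical mixtures with quark fractions `f₁ = (1-κ₁₂)/(1-κ₁₂κ₂₁)` and
`f₂ = κ₂₁(1-κ₁₂)/(1-κ₁₂κ₂₁)`. -/
theorem samples_are_mixtures_of_topics
    {X : Type*} (p₁ p₂ : X → ℝ) (κ₁₂ κ₂₁ : ℝ)
    (h12 : κ₁₂ ∈ Set.Ico (0 : ℝ) 1) (h21 : κ₂₁ ∈ Set.Ico (0 : ℝ) 1) :
    let pq : X → ℝ := fun x => (p₁ x - κ₁₂ * p₂ x) / (1 - κ₁₂)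
    let pg : X → ℝ := fun x => (p₂ x - κ₂₁ * p₁ x) / (1 - κ₂₁)
    let f₁ : ℝ := (1 - κ₁₂) / (1 - κ₁₂ * κ₂₁)
    let f₂ : ℝ := κ₂₁ * (1 - κ₁₂) / (1 - κ₁₂ * κ₂₁)
    0 ≤ f₂ ∧ f₂ ≤ f₁ ∧ f₁ ≤ 1 ∧
      ∀ x : X, p₁ x = f₁ * pq x + (1 - f₁) * pg x ∧
        p₂ x = f₂ * pq x + (1 - f₂) * pg x := by
  obtain ⟨a0, a1⟩ := h12
  obtain ⟨b0, b1⟩ := h21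
  intro pq pg f₁ f₂
  have ha : 0 < 1 - κ₁₂ := by linarith
  have hb : 0 < 1 - κ₂₁ := by linarith
  have hD : 0 < 1 - κ₁₂ * κ₂₁ := by nlinarith
  have ha' := ha.ne'
  have hb' := hb.ne'
  have hD' := hD.ne'
  have hD2 : 1 - κ₂₁ * κ₁₂ ≠ 0 := by rwa [mul_comm]
  have e1 : 1 - f₁ = κ₁₂ * (1 - κ₂₁) / (1 - κ₁₂ * κ₂₁) := by
    simp only [f₁]
    rw [eq_div_iff hD', sub_mul, div_mul_cancel₀ _ hD']
    ring
  have e2 : 1 - f₂ = (1 - κ₂₁) / (1 - κ₁₂ * κ₂₁) := by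
    simp only [f₂]
    rw [eq_div_iff hD', sub_mul, div_mul_cancel₀ _ hD']
    ring
  refine ⟨by positivity, ?_, ?_, fun x => ⟨?_, ?_⟩⟩
  · exact div_le_div_of_nonneg_right (by nlinarith) hD.le
  · exact (div_le_one hD).2 (by nlinarith)
  · rw [e1]
    simp only [f₁, pq, pg]
    field_simp
    ring
  · rw [e2]
    simp only [f₂, pq, pg]
    field_simp
    ring
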